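/- arXiv:1005.3136 — 5 statements merged into one kernel-verified Lean document; each statement's English description precedes it below -/
import Mathlib

section
/- Let C : [0,∞) → [0,∞) be a nondecreasing function and let (f_k) be a sequence of functions from [0,∞) to ℝ^m such that f_k(0) = 0 for every k and the total variation of f_k on [0,t] is at most C(t) for every k and every t ≥ 0. Then there exist a subsequence (f_{k_j}) and a function f : [0,∞) → ℝ^m whose total variation on [0,t] is at most C(t) for every t, such that f_{k_j}(t) converges to f(t) for every t ≥ 0. -/
open Filter Set

/-!
Ramsey's theorem for pairs turns any sequence of upper sets of a linear order into one which, along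
a subsequence, is monotone for inclusion, hence eventually constant at each point. Applied to the
superlevel sets `{t | r < V k t}`, with `r` in a countable dense set, and combined with a diagonal
argument, this extracts a pointwise convergent subsequence from pointwise bounded monotone functions
`V k`.

Taking for `V k` the variation function of `f k` gives a limit `W`. The increments of `f k` are
bounded by those of `V k`, so asymptotically they are bounded by those of `W`: the `f k` are
asymptotically equicontinuous for the topology induced by `W`. This topology is separable, so it is
enough to extract convergence on a countable set.
-/

open TopologicalSpace
open scoped ENNReal Topology

theorem exists_strictMono_forall_of_antitone {P : ℕ → Filter ℕ → Prop}
    (hP : ∀ i, Antitone (P i))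
    (hsub : ∀ i (φ : ℕ → ℕ), StrictMono φ → ∃ ψ : ℕ → ℕ, StrictMono ψ ∧ P i (map (φ ∘ ψ) atTop)) :
    ∃ φ : ℕ → ℕ, StrictMono φ ∧ ∀ i, P i (map φ atTop) := by
  choose ψ hψ hPψ using hsub
  let Φ : ℕ → {φ : ℕ → ℕ // StrictMono φ} :=
    Nat.rec ⟨id, strictMono_id⟩ fun i φ => ⟨φ ∘ ψ i φ φ.2, φ.2.comp (hψ i φ φ.2)⟩
  let L : ℕ → Filter ℕ := fun i => map (Φ i).1 atTop
  have hL : Antitone L := antitone_nat_of_succ_le fun i =>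
    map_mono (m := (Φ i).1) (hψ i _ (Φ i).2).tendsto_atTop
  have hLtop : ⨅ i, L i ≤ map id atTop := iInf_le L 0
  have hLbot : NeBot ((⨅ i, L i) ⊓ map id atTop) := by
    rw [inf_eq_left.mpr hLtop]
    exact iInf_neBot_of_directed' hL.directed_ge fun _ => inferInstance
  -- A sequence tending to `⨅ i, L i` refines every `Φ i`, as the diagonal `k ↦ Φ k k` does.
  obtain ⟨φ, hφ, hφL⟩ := subseq_tendsto_of_neBot hLbot
  exact ⟨φ, hφ, fun i => hP i (hφL.trans (iInf_le L (i + 1))) (hPψ i _ (Φ i).2)⟩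

theorem eventuallyConst_mem_of_monotone {ι α : Type*} [Preorder ι] {U : ι → Set α}
    (hU : Monotone U) (t : α) : EventuallyConst (fun k => t ∈ U k) atTop := by
  by_cases h : ∃ k, t ∈ U k
  · obtain ⟨k, hk⟩ := h
    exact eventuallyConst_pred.mpr <| .inl <|
      (eventually_ge_atTop k).mono fun l hl => hU hl hk
  · exact eventuallyConst_pred.mpr <| .inr <| .of_forall (not_exists.mp h)

theorem exists_subseq_eventuallyConst_mem {α : Type*} [LinearOrder α] {U : ℕ → Set α}
    (hU : ∀ k, IsUpperSet (U k)) :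
    ∃ φ : ℕ → ℕ, StrictMono φ ∧ ∀ t, EventuallyConst (fun k => t ∈ U (φ k)) atTop := by
  obtain ⟨φ, hφ | hφ⟩ := exists_increasing_or_nonincreasing_subseq (· ⊆ ·) U
  · have hmono : Monotone (U ∘ φ) := monotone_nat_of_le_succ fun k => hφ k _ k.lt_succ_self
    exact ⟨φ, φ.strictMono, eventuallyConst_mem_of_monotone hmono⟩
  · have hanti : Monotone fun k => (U (φ k))ᶜ := monotone_nat_of_le_succ fun k =>
      compl_subset_compl.mpr <| ((hU _).total (hU _)).resolve_left (hφ k _ k.lt_succ_self)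
    refine ⟨φ, φ.strictMono, fun t => ?_⟩
    simpa [Function.comp_def] using (eventuallyConst_mem_of_monotone hanti t).comp Not

theorem exists_subseq_tendsto_of_monotone {α Y : Type*} [LinearOrder α]
    [ConditionallyCompleteLinearOrder Y] [DenselyOrdered Y] [Nonempty Y] [TopologicalSpace Y]
    [OrderTopology Y] [SeparableSpace Y]
    {V : ℕ → α → Y} (hV : ∀ k, Monotone (V k)) (hbelow : ∀ t, BddBelow (range fun k => V k t))
    (habove : ∀ t, BddAbove (range fun k => V k t)) :
    ∃ φ : ℕ → ℕ, StrictMono φ ∧ ∃ W : α → Y, ∀ t, Tendsto (fun k => V (φ k) t) atTop (𝓝 (W t)) := by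
  obtain ⟨φ, hφ, hconst⟩ := exists_strictMono_forall_of_antitone
    (P := fun i L => ∀ t, EventuallyConst (fun k => denseSeq Y i < V k t) L)
    (fun _ _ _ hL h t => (h t).anti hL)
    (fun i φ _ => exists_subseq_eventuallyConst_mem
      (U := fun k => {t | denseSeq Y i < V (φ k) t}) fun k _ _ hst => (hV _ hst).trans_lt')
  suffices ∀ t, ∃ w, Tendsto (fun k => V (φ k) t) atTop (𝓝 w) from ⟨φ, hφ, Classical.skolem.mp this⟩
  intro t
  refine tendsto_of_no_upcrossings (denseRange_denseSeq Y) ?_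
    ((habove t).mono (range_comp_subset_range φ _)).isBoundedUnder_of_range
    ((hbelow t).mono (range_comp_subset_range φ _)).isBoundedUnder_of_range
  rintro _ ⟨i, rfl⟩ _ ⟨j, rfl⟩ hij ⟨hlt, hgt⟩
  rcases eventuallyConst_pred.mp (hconst i t) with h | h
  · obtain ⟨k, hk, hk'⟩ := (hlt.and_eventually h).exists
    exact hk.not_gt hk'
  · obtain ⟨k, hk, hk'⟩ := (hgt.and_eventually h).exists
    exact hk' (hij.trans hk)

theorem cauchySeq_of_forall_eventually_edist_lt {ι E : Type*} [Nonempty ι] [SemilatticeSup ι]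
    [PseudoEMetricSpace E] {u : ι → E}
    (h : ∀ ε > 0, ∃ v : ι → E, CauchySeq v ∧ ∀ᶠ k in atTop, edist (v k) (u k) < ε) :
    CauchySeq u := by
  refine EMetric.cauchySeq_iff.mpr fun ε hε => ?_
  have hε3 : 0 < ε / 3 := ENNReal.div_pos hε.ne' (by finiteness)
  obtain ⟨v, hv, hvu⟩ := h (ε / 3) hε3
  obtain ⟨M, hM⟩ := EMetric.cauchySeq_iff.mp hv (ε / 3) hε3
  obtain ⟨N, hN⟩ := eventually_atTop.mp hvu
  refine ⟨M ⊔ N, fun k hk l hl => ?_⟩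
  have hk' := hN k (le_sup_right.trans hk)
  have hl' := hN l (le_sup_right.trans hl)
  have hkl := hM k (le_sup_left.trans hk) l (le_sup_left.trans hl)
  calc
    edist (u k) (u l) ≤ edist (u k) (v k) + edist (v k) (v l) + edist (v l) (u l) :=
      edist_triangle4 _ _ _ _
    _ < ε / 3 + ε / 3 + ε / 3 := by
      rw [edist_comm (u k)]
      exact ENNReal.add_lt_add (ENNReal.add_lt_add hk' hkl) hl'
    _ = ε := ENNReal.add_thirds ε

theorem exists_subseq_tendsto_of_asymptotically_equicontinuous {X E : Type*} [TopologicalSpace X]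
    [SeparableSpace X] [PseudoEMetricSpace E] {K : X → Set E}
    (hK : ∀ x, IsCompact (K x)) {f : ℕ → X → E} (hfK : ∀ k x, f k x ∈ K x)
    (hf : ∀ x, ∀ ε > 0, ∀ᶠ y in 𝓝 x, ∀ᶠ k in atTop, edist (f k y) (f k x) < ε) :
    ∃ φ : ℕ → ℕ, StrictMono φ ∧ ∃ g : X → E, ∀ x, Tendsto (fun k => f (φ k) x) atTop (𝓝 (g x)) := by
  obtain ⟨D, hDcount, hDdense⟩ := exists_countable_dense X
  have := hDcount.to_subtype
  obtain ⟨w, -, φ, hφ, hw⟩ := (isCompact_univ_pi fun d : D => hK d).tendsto_subseq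
    (x := fun k (d : D) => f k d) fun k d _ => hfK k d
  rw [tendsto_pi_nhds] at hw
  suffices ∀ x, ∃ y, Tendsto (fun k => f (φ k) x) atTop (𝓝 y) from ⟨φ, hφ, Classical.skolem.mp this⟩
  intro x
  have hcauchy : CauchySeq fun k => f (φ k) x :=
    cauchySeq_of_forall_eventually_edist_lt fun ε hε => by
      obtain ⟨d, hd, hdx⟩ :=
        ((mem_closure_iff_frequently.mp (hDdense x)).and_eventually (hf x ε hε)).exists
      exact ⟨fun k => f (φ k) d, (hw ⟨d, hd⟩).cauchySeq, hφ.tendsto_atTop.eventually hdx⟩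
  obtain ⟨y, -, hy⟩ :=
    cauchySeq_tendsto_of_isComplete (hK x).isComplete (fun k => hfK (φ k) x) hcauchy
  exact ⟨y, hy⟩

theorem exists_subseq_tendsto_of_edist_le {X Y E : Type*} [PseudoEMetricSpace Y]
    [SecondCountableTopology Y] [PseudoEMetricSpace E] {K : X → Set E}
    (hK : ∀ x, IsCompact (K x)) {f : ℕ → X → E} (hfK : ∀ k x, f k x ∈ K x)
    {V : ℕ → X → Y} {W : X → Y} (hV : ∀ x, Tendsto (fun k => V k x) atTop (𝓝 (W x)))
    (hfV : ∀ k x y, edist (f k x) (f k y) ≤ edist (V k x) (V k y)) :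
    ∃ φ : ℕ → ℕ, StrictMono φ ∧ ∃ g : X → E, ∀ x, Tendsto (fun k => f (φ k) x) atTop (𝓝 (g x)) := by
  let _ : TopologicalSpace X := .induced W inferInstance
  have : SecondCountableTopology X := secondCountableTopology_induced X Y W
  have hW : Continuous W := continuous_induced_dom
  refine exists_subseq_tendsto_of_asymptotically_equicontinuous hK hfK fun x ε hε => ?_
  have hnear : ∀ᶠ y in 𝓝 x, edist (W y) (W x) < ε :=
    (hW.edist continuous_const).continuousAt.eventually_lt_const (by simpa using hε)
  filter_upwards [hnear] with y hy
  filter_upwards [((hV y).edist (hV x)).eventually_lt_const hy] with k hk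
  exact (hfV k y x).trans_lt hk

section Variation

variable {α E : Type*} [LinearOrder α] [PseudoEMetricSpace E] {s : Set α}

theorem locallyBoundedVariationOn_of_le {f : α → E} {C : α → α → ℝ≥0∞}
    (hC : ∀ u ∈ s, ∀ v ∈ s, C u v ≠ ∞)
    (hfv : ∀ u ∈ s, ∀ v ∈ s, eVariationOn f (s ∩ Icc u v) ≤ C u v) :
    LocallyBoundedVariationOn f s :=
  fun u v hu hv => ne_top_of_le_ne_top (hC u hu v hv) (hfv u hu v hv)

theorem edist_le_edist_variationOnFromTo {f : α → E} (hf : LocallyBoundedVariationOn f s)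
    {a x y : α} (ha : a ∈ s) (hx : x ∈ s) (hy : y ∈ s) :
    edist (f x) (f y) ≤ edist (variationOnFromTo f s a x) (variationOnFromTo f s a y) := by
  wlog hxy : x ≤ y
  · simpa only [edist_comm] using this hf ha hy hx (le_of_not_ge hxy)
  calc
    edist (f x) (f y) ≤ eVariationOn f (s ∩ Icc x y) :=
      eVariationOn.edist_le f ⟨hx, left_mem_Icc.mpr hxy⟩ ⟨hy, right_mem_Icc.mpr hxy⟩
    _ = ENNReal.ofReal (variationOnFromTo f s x y) := by
      rw [variationOnFromTo.eq_of_le f s hxy, ENNReal.ofReal_toReal (hf x y hx hy)]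
    _ ≤ edist (variationOnFromTo f s a x) (variationOnFromTo f s a y) := by
      rw [edist_comm, edist_dist, Real.dist_eq, variationOnFromTo.sub_right hf ha hy hx]
      exact ENNReal.ofReal_le_ofReal (le_abs_self _)

theorem abs_variationOnFromTo_le {f : α → E} {a b : α} {c : ℝ≥0∞} (hc : c ≠ ∞)
    (hab : eVariationOn f (s ∩ Icc a b) ≤ c) (hba : eVariationOn f (s ∩ Icc b a) ≤ c) :
    |variationOnFromTo f s a b| ≤ c.toReal := by
  unfold variationOnFromTo
  split_ifs
  · simpa using ENNReal.toReal_mono hc hab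
  · simpa using ENNReal.toReal_mono hc hba

theorem eVariationOn_le_of_tendsto {ι : Type*} {l : Filter ι} {F : ι → α → E} {f : α → E}
    {c : ℝ≥0∞} (hlim : ∀ x ∈ s, Tendsto (fun i => F i x) l (𝓝 (f x)))
    (hF : ∃ᶠ i in l, eVariationOn (F i) s ≤ c) : eVariationOn f s ≤ c :=
  le_of_forall_lt fun _ hv =>
    let ⟨_, hle, hlt⟩ :=
      (hF.and_eventually (eVariationOn.lowerSemicontinuous_aux hlim hv)).exists
    hlt.trans_le hle

theorem mem_closedBall_of_eVariationOn_le {F : Type*} [PseudoMetricSpace F] {f : α → F} {c : ℝ}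
    (hc : 0 ≤ c) (hf : eVariationOn f s ≤ ENNReal.ofReal c) {x y : α} (hx : x ∈ s) (hy : y ∈ s) :
    f x ∈ Metric.closedBall (f y) c := by
  rw [← Metric.closedEBall_ofReal hc]
  exact (eVariationOn.edist_le f hx hy).trans hf

theorem exists_subseq_tendsto_variationOnFromTo {C : α → α → ℝ≥0∞}
    (hC : ∀ u ∈ s, ∀ v ∈ s, C u v ≠ ∞) {f : ℕ → α → E}
    (hfv : ∀ k, ∀ u ∈ s, ∀ v ∈ s, eVariationOn (f k) (s ∩ Icc u v) ≤ C u v) {a : α} (ha : a ∈ s) :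
    ∃ φ : ℕ → ℕ, StrictMono φ ∧ ∃ W : s → ℝ,
      ∀ t : s, Tendsto (fun k => variationOnFromTo (f (φ k)) s a t) atTop (𝓝 (W t)) := by
  have hbound k (t : s) : |variationOnFromTo (f k) s a t| ≤ (C a t ⊔ C t a).toReal :=
    abs_variationOnFromTo_le (max_ne_top (hC a ha t t.2) (hC t t.2 a ha))
      ((hfv k a ha t t.2).trans le_sup_left) ((hfv k t t.2 a ha).trans le_sup_right)
  exact exists_subseq_tendsto_of_monotone (V := fun k (t : s) => variationOnFromTo (f k) s a t)
    (fun k x y hxy =>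
      variationOnFromTo.monotoneOn (locallyBoundedVariationOn_of_le hC (hfv k)) ha x.2 y.2 hxy)
    (fun t => ⟨_, forall_mem_range.mpr fun k => (abs_le.mp (hbound k t)).1⟩)
    (fun t => ⟨_, forall_mem_range.mpr fun k => (abs_le.mp (hbound k t)).2⟩)

theorem helly_selection_general {C : α → α → ℝ≥0∞} (hC : ∀ u ∈ s, ∀ v ∈ s, C u v ≠ ∞)
    {K : α → Set E} (hK : ∀ t ∈ s, IsCompact (K t)) {f : ℕ → α → E}
    (hfK : ∀ k, ∀ t ∈ s, f k t ∈ K t)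
    (hfv : ∀ k, ∀ u ∈ s, ∀ v ∈ s, eVariationOn (f k) (s ∩ Icc u v) ≤ C u v) :
    ∃ φ : ℕ → ℕ, StrictMono φ ∧ ∃ g : α → E,
      (∀ u ∈ s, ∀ v ∈ s, eVariationOn g (s ∩ Icc u v) ≤ C u v) ∧
      ∀ t ∈ s, Tendsto (fun k => f (φ k) t) atTop (𝓝 (g t)) := by
  rcases s.eq_empty_or_nonempty with rfl | ⟨a, ha⟩
  · exact ⟨id, strictMono_id, f 0, by simp, by simp⟩
  obtain ⟨φ, hφ, W, hW⟩ := exists_subseq_tendsto_variationOnFromTo hC hfv ha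
  obtain ⟨ψ, hψ, g, hg⟩ := exists_subseq_tendsto_of_edist_le (fun t : s => hK t t.2)
    (fun k t => hfK (φ k) t t.2) hW
    fun k x y => edist_le_edist_variationOnFromTo
      (locallyBoundedVariationOn_of_le hC (hfv (φ k))) ha x.2 y.2
  have hlim : ∀ t ∈ s, ∃ y, Tendsto (fun k => f (φ (ψ k)) t) atTop (𝓝 y) :=
    fun t ht => ⟨g ⟨t, ht⟩, hg ⟨t, ht⟩⟩
  have : Nonempty E := ⟨f 0 a⟩
  choose! g hg using hlim
  exact ⟨φ ∘ ψ, hφ.comp hψ, g, fun u hu v hv => eVariationOn_le_of_tendsto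
    (fun t ht => hg t ht.1) (.of_forall fun k => hfv (φ (ψ k)) u hu v hv), hg⟩

end Variation

/-- Helly-type selection theorem: from a sequence of functions vanishing at `0` whose total
variation on `[0,t]` is bounded by a nondecreasing function `C t`, one can extract a pointwise
convergent subsequence whose limit satisfies the same variation bound. -/
theorem helly_selection {m : ℕ} (C : ℝ → ℝ)
    (hC : MonotoneOn C (Set.Ici (0:ℝ))) (hC0 : ∀ t ≥ (0:ℝ), 0 ≤ C t)
    (f : ℕ → ℝ → EuclideanSpace ℝ (Fin m))
    (hf0 : ∀ k, f k 0 = 0)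
    (hfv : ∀ k, ∀ t ≥ (0:ℝ), eVariationOn (f k) (Set.Icc 0 t) ≤ ENNReal.ofReal (C t)) :
    ∃ φ : ℕ → ℕ, StrictMono φ ∧ ∃ g : ℝ → EuclideanSpace ℝ (Fin m),
      (∀ t ≥ (0:ℝ), eVariationOn g (Set.Icc 0 t) ≤ ENNReal.ofReal (C t)) ∧
      (∀ t ≥ (0:ℝ), Tendsto (fun j => f (φ j) t) atTop (nhds (g t))) := by
  have hball k (t : ℝ) (ht : t ∈ Ici 0) : f k t ∈ Metric.closedBall 0 (C t) :=
    hf0 k ▸ mem_closedBall_of_eVariationOn_le (hC0 t ht) (hfv k t ht)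
      (right_mem_Icc.mpr ht) (left_mem_Icc.mpr ht)
  obtain ⟨φ, hφ, g, hgv, hg⟩ := helly_selection_general (s := Ici 0)
    (C := fun _ v => ENNReal.ofReal (C v)) (fun _ _ _ _ => ENNReal.ofReal_ne_top)
    (fun t _ => isCompact_closedBall 0 (C t)) hball
    fun k _ _ v hv =>
      (eVariationOn.mono (f k) fun _ hx => And.intro hx.1 hx.2.2).trans (hfv k v hv)
  refine ⟨φ, hφ, g, fun t ht => ?_, hg⟩
  exact (eVariationOn.mono g fun _ hx => And.intro hx.1 hx).trans (hgv 0 self_mem_Ici t ht)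
end

section
/- Let τ_n, τ : [0,∞) → [0,∞) be strictly increasing unbounded functions such that τ_n(t) → τ(t) at every continuity point t of τ. Then the generalized inverses τ_n⁻¹ converge to τ⁻¹ uniformly on every compact subset of [0,∞). -/
open Filter Set

/-- The generalized (right-continuous) inverse of a function `κ : [0,∞) → [0,∞)`,
`κ⁻¹(t) = inf {s ≥ 0 : κ(s) > t}`. -/
noncomputable def ginv (κ : ℝ → ℝ) (t : ℝ) : ℝ := sInf {s : ℝ | 0 ≤ s ∧ t < κ s}

/-!
The value `ginv κ y` is located by evaluating `κ` at test points: `y < κ p` gives `ginv κ y ≤ p`,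
and `κ q ≤ y` gives `q ≤ ginv κ y`. Strict monotonicity of `σ` gives the strict inequalities
`σ q < x < σ p` whenever `q < ginv σ x < p`, and these survive perturbing both `σ` and `x` if `τ`
converges at `p` and `q`. Such test points are dense, as a monotone function has only countably many
discontinuities. Hence `ginv (τ i) y → ginv σ x` jointly in `i` and `y → x`, which, `ginv σ` being
continuous, is locally uniform convergence.
-/

lemma tendstoLocallyUniformlyOn_of_tendsto_prod {ι X Y : Type*} [TopologicalSpace X]
    [UniformSpace Y] {l : Filter ι} {F : ι → X → Y} {f : X → Y} {s : Set X}
    (hf : ContinuousOn f s)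
    (hF : ∀ x ∈ s, Tendsto (fun z : ι × X ↦ F z.1 z.2) (l ×ˢ nhdsWithin x s) (nhds (f x))) :
    TendstoLocallyUniformlyOn F f l s := by
  rw [tendstoLocallyUniformlyOn_iff_forall_tendsto]
  intro x hx
  have hlim : Tendsto (fun z : ι × X ↦ f z.2) (l ×ˢ nhdsWithin x s) (nhds (f x)) :=
    (hf x hx).tendsto.comp tendsto_snd
  exact (hlim.prodMk_nhds (hF x hx)).mono_right (nhds_le_uniformity _)

lemma dense_continuousWithinAt_of_monotoneOn {Y : Type*} [LinearOrder Y] [TopologicalSpace Y]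
    [OrderTopology Y] [SecondCountableTopology Y] {f : ℝ → Y} {s : Set ℝ} (hf : MonotoneOn f s) :
    Dense {t | t ∈ s → ContinuousWithinAt f s t} := by
  simpa only [compl_ofPred, not_and_not_right] using
    hf.countable_not_continuousWithinAt.dense_compl ℝ

section Inverse

variable {κ : ℝ → ℝ} {p q y : ℝ}

lemma ginv_nonneg (κ : ℝ → ℝ) (y : ℝ) : 0 ≤ ginv κ y :=
  Real.sInf_nonneg fun _ hs ↦ hs.1

lemma ginv_le_of_lt_apply (hp : 0 ≤ p) (h : y < κ p) : ginv κ y ≤ p :=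
  csInf_le ⟨0, fun _ hs ↦ hs.1⟩ ⟨hp, h⟩

lemma le_ginv_of_apply_le (hκ : MonotoneOn κ (Ici 0)) (hy : ∃ s ≥ 0, y < κ s) (hq : 0 ≤ q)
    (h : κ q ≤ y) : q ≤ ginv κ y :=
  le_csInf hy fun _ hs ↦ (hκ.reflect_lt hq hs.1 (h.trans_lt hs.2)).le

lemma lt_apply_of_ginv_lt (hκ : MonotoneOn κ (Ici 0)) (hy : ∃ s ≥ 0, y < κ s)
    (h : ginv κ y < p) : y < κ p := by
  obtain ⟨s, ⟨hs, hys⟩, hsp⟩ := exists_lt_of_csInf_lt hy h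
  exact hys.trans_le (hκ hs (hs.trans hsp.le) hsp.le)

lemma apply_lt_of_lt_ginv (hκ : StrictMonoOn κ (Ici 0)) (hq : 0 ≤ q) (h : q < ginv κ y) :
    κ q < y := by
  obtain ⟨r, hqr, hr⟩ := exists_between h
  have hr₀ : 0 ≤ r := hq.trans hqr.le
  calc κ q < κ r := hκ hq hr₀ hqr
    _ ≤ y := le_of_not_gt fun hy ↦ hr.not_ge (ginv_le_of_lt_apply hr₀ hy)

end Inverse

section Convergence

variable {ι : Type*} {l : Filter ι} {τ : ι → ℝ → ℝ} {σ : ℝ → ℝ} {D : Set ℝ} {x : ℝ}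

theorem tendsto_ginv_prod_nhds (hτ : ∀ i, MonotoneOn (τ i) (Ici 0))
    (hσ : StrictMonoOn σ (Ici 0)) (hD : Dense D)
    (hconv : ∀ t ∈ D, 0 ≤ t → Tendsto (fun i ↦ τ i t) l (nhds (σ t)))
    (hx : ∃ s ≥ 0, x < σ s) :
    Tendsto (fun z : ι × ℝ ↦ ginv (τ z.1) z.2) (l ×ˢ nhds x) (nhds (ginv σ x)) := by
  have tendsto_apply {t : ℝ} (htD : t ∈ D) (ht : 0 ≤ t) :
      Tendsto (fun z : ι × ℝ ↦ τ z.1 t) (l ×ˢ nhds x) (nhds (σ t)) :=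
    (hconv t htD ht).comp tendsto_fst
  have exists_upper {b : ℝ} (hb : ginv σ x < b) :
      ∃ p, 0 ≤ p ∧ p < b ∧ ∀ᶠ z : ι × ℝ in l ×ˢ nhds x, z.2 < τ z.1 p := by
    obtain ⟨p, hpD, hp, hpb⟩ := hD.exists_between hb
    have hp₀ : 0 ≤ p := (ginv_nonneg σ x).trans hp.le
    exact ⟨p, hp₀, hpb, tendsto_snd.eventually_lt (tendsto_apply hpD hp₀)
      (lt_apply_of_ginv_lt hσ.monotoneOn hx hp)⟩
  refine tendsto_order.2 ⟨fun a ha ↦ ?_, fun b hb ↦ ?_⟩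
  · rcases lt_or_ge a 0 with ha₀ | ha₀
    · exact .of_forall fun z ↦ ha₀.trans_le (ginv_nonneg _ _)
    obtain ⟨q, hqD, haq, hq⟩ := hD.exists_between ha
    have hq₀ : 0 ≤ q := ha₀.trans haq.le
    -- The lower bound fails for the junk value `sInf ∅ = 0`; the point `p` rules it out.
    obtain ⟨p, hp₀, -, hp⟩ := exists_upper (lt_add_one _)
    filter_upwards [hp, (tendsto_apply hqD hq₀).eventually_lt tendsto_snd
      (apply_lt_of_lt_ginv hσ hq₀ hq)] with z hzp hzq
    exact haq.trans_le (le_ginv_of_apply_le (hτ z.1) ⟨p, hp₀, hzp⟩ hq₀ hzq.le)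
  · obtain ⟨p, hp₀, hpb, hp⟩ := exists_upper hb
    filter_upwards [hp] with z hz
    exact (ginv_le_of_lt_apply hp₀ hz).trans_lt hpb

lemma continuousAt_ginv (hσ : StrictMonoOn σ (Ici 0)) (hx : ∃ s ≥ 0, x < σ s) :
    ContinuousAt (ginv σ) x := by
  have hjoint : Tendsto (fun z : Unit × ℝ ↦ ginv σ z.2) (pure () ×ˢ nhds x) (nhds (ginv σ x)) :=
    tendsto_ginv_prod_nhds (τ := fun _ ↦ σ) (fun _ ↦ hσ.monotoneOn) hσ dense_univ
      (fun _ _ _ ↦ tendsto_const_nhds) hx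
  rwa [pure_prod, tendsto_map'_iff] at hjoint

theorem ginv_tendsto_uniformly_on_compacts_general (hτ : ∀ i, MonotoneOn (τ i) (Ici 0))
    (hσ : StrictMonoOn σ (Ici 0)) (hD : Dense D)
    (hconv : ∀ t ∈ D, 0 ≤ t → Tendsto (fun i ↦ τ i t) l (nhds (σ t)))
    {K : Set ℝ} (hK : IsCompact K) (hKσ : ∀ x ∈ K, ∃ s ≥ 0, x < σ s) :
    TendstoUniformlyOn (fun i ↦ ginv (τ i)) (ginv σ) l K := by
  rw [← tendstoLocallyUniformlyOn_iff_tendstoUniformlyOn_of_compact hK]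
  refine tendstoLocallyUniformlyOn_of_tendsto_prod
    (fun x hx ↦ (continuousAt_ginv hσ (hKσ x hx)).continuousWithinAt) fun x hx ↦ ?_
  exact (tendsto_ginv_prod_nhds hτ hσ hD hconv (hKσ x hx)).mono_left
    (prod_mono_right l nhdsWithin_le_nhds)

end Convergence

/-- If strictly increasing unbounded functions `τ n : [0,∞) → [0,∞)` converge to a strictly
increasing unbounded `σ` at each continuity point of `σ`, then the generalized inverses
converge uniformly on every compact subset of `[0,∞)`. -/
theorem ginv_tendsto_uniformly_on_compacts (τ : ℕ → ℝ → ℝ) (σ : ℝ → ℝ)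
    (hτmono : ∀ n, StrictMonoOn (τ n) (Set.Ici 0))
    (hσmono : StrictMonoOn σ (Set.Ici 0))
    (hτpos : ∀ n, ∀ t ≥ (0:ℝ), 0 ≤ τ n t)
    (hσpos : ∀ t ≥ (0:ℝ), 0 ≤ σ t)
    (hτunbdd : ∀ n, ∀ M : ℝ, ∃ s ≥ (0:ℝ), M < τ n s)
    (hσunbdd : ∀ M : ℝ, ∃ s ≥ (0:ℝ), M < σ s)
    (hconv : ∀ t ≥ (0:ℝ), ContinuousWithinAt σ (Set.Ici 0) t →
      Tendsto (fun n => τ n t) atTop (nhds (σ t))) :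
    ∀ K ⊆ Set.Ici (0:ℝ), IsCompact K →
      TendstoUniformlyOn (fun n => ginv (τ n)) (ginv σ) atTop K := by
  intro K _ hK
  exact ginv_tendsto_uniformly_on_compacts_general (fun n ↦ (hτmono n).monotoneOn) hσmono
    (dense_continuousWithinAt_of_monotoneOn hσmono.monotoneOn)
    (fun t ht ht₀ ↦ hconv t ht₀ (ht ht₀)) hK fun x _ ↦ hσunbdd x
end

section
/- Let A be a maximal monotone operator on ℝ^m, let x ∈ D(A), and for each positive integer n let u_n ∈ ℝ^m satisfy n(x − u_n) ∈ A(u_n) (i.e. u_n = J_n x is the resolvent (1 + A/n)⁻¹ applied to x). Then u_n → x as n → ∞. -/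
open Filter Set
open scoped RealInnerProductSpace

/-- A multivalued operator on `ℝ^m` is monotone if
`⟨x₁ - x₂, y₁ - y₂⟩ ≥ 0` for all pairs in its graph. -/
def IsMonotoneOp {m : ℕ} (A : EuclideanSpace ℝ (Fin m) → Set (EuclideanSpace ℝ (Fin m))) : Prop :=
  ∀ x₁ y₁ x₂ y₂, y₁ ∈ A x₁ → y₂ ∈ A x₂ → (0:ℝ) ≤ ⟪x₁ - x₂, y₁ - y₂⟫

/-- A multivalued operator is maximal monotone if it is monotone and its graph is maximal
among graphs of monotone operators. -/
def IsMaximalMonotone {m : ℕ}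
    (A : EuclideanSpace ℝ (Fin m) → Set (EuclideanSpace ℝ (Fin m))) : Prop :=
  IsMonotoneOp A ∧
    ∀ x y, (∀ x₂ y₂, y₂ ∈ A x₂ → (0:ℝ) ≤ ⟪x - x₂, y - y₂⟫) → y ∈ A x

/-!
Write `J_c = (1 + A / c)⁻¹`. If `y ∈ A z`, then `z = J_c (z + c⁻¹ y)`. Monotonicity makes `J_c`
nonexpansive, so `‖J_c x - z‖ ≤ ‖x - z - c⁻¹ y‖`. As `c → ∞` the right-hand side tends to `‖x - z‖`,
and `z` can be taken as close to `x` as desired whenever `x` lies in the closure of the domain.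
-/

section InnerProductSpace

variable {E : Type*} [SeminormedAddCommGroup E] [InnerProductSpace ℝ E]

theorem norm_le_norm_of_inner_sub_nonneg {v w : E} (h : 0 ≤ ⟪v, w - v⟫) : ‖v‖ ≤ ‖w‖ := by
  have h_mul : ‖v‖ * ‖v‖ ≤ ‖v‖ * ‖w‖ :=
    calc
      ‖v‖ * ‖v‖ = ⟪v, v⟫ := (real_inner_self_eq_norm_mul_norm v).symm
      _ ≤ ⟪v, w⟫ := by rwa [inner_sub_right, sub_nonneg] at h
      _ ≤ ‖v‖ * ‖w‖ := real_inner_le_norm v w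
  rcases (norm_nonneg v).eq_or_lt with hv | hv
  · exact hv ▸ norm_nonneg w
  · exact le_of_mul_le_mul_left h_mul hv

/-- Monotonicity of a set-valued operator on a real inner product space, with the quantifiers
arranged so that `IsMonotoneOp` is definitionally the case of `EuclideanSpace ℝ (Fin m)`. -/
def IsMonotoneSetValued (A : E → Set E) : Prop :=
  ∀ x₁ y₁ x₂ y₂, y₁ ∈ A x₁ → y₂ ∈ A x₂ → (0 : ℝ) ≤ ⟪x₁ - x₂, y₁ - y₂⟫

namespace IsMonotoneSetValued

variable {A : E → Set E} {c : ℝ} {u x y z : E}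

theorem norm_resolvent_sub_le {u₁ u₂ x₁ x₂ : E} (hA : IsMonotoneSetValued A) (hc : 0 < c)
    (h₁ : c • (x₁ - u₁) ∈ A u₁) (h₂ : c • (x₂ - u₂) ∈ A u₂) : ‖u₁ - u₂‖ ≤ ‖x₁ - x₂‖ := by
  have h_inner : 0 ≤ c * ⟪u₁ - u₂, (x₁ - x₂) - (u₁ - u₂)⟫ := by
    rw [← real_inner_smul_right, sub_sub_sub_comm, smul_sub]
    exact hA _ _ _ _ h₁ h₂
  exact norm_le_norm_of_inner_sub_nonneg (nonneg_of_mul_nonneg_right h_inner hc)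

theorem norm_resolvent_sub_le_of_mem (hA : IsMonotoneSetValued A) (hc : 0 < c)
    (hy : y ∈ A z) (hu : c • (x - u) ∈ A u) : ‖u - z‖ ≤ ‖x - z‖ + ‖y‖ / c := by
  have hz : c • ((z + c⁻¹ • y) - z) ∈ A z := by
    rwa [add_sub_cancel_left, smul_inv_smul₀ hc.ne']
  calc
    ‖u - z‖ ≤ ‖x - (z + c⁻¹ • y)‖ := hA.norm_resolvent_sub_le hc hu hz
    _ ≤ ‖x - z‖ + ‖c⁻¹ • y‖ := by rw [← sub_sub]; exact norm_sub_le _ _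
    _ = ‖x - z‖ + ‖y‖ / c := by
      rw [norm_smul_of_nonneg (inv_nonneg.2 hc.le), inv_mul_eq_div]

end IsMonotoneSetValued

theorem resolvent_tendsto_general {A : E → Set E} (hA : IsMonotoneSetValued A) {x : E}
    (hx : x ∈ closure {z | (A z).Nonempty}) {ι : Type*} {l : Filter ι} {c : ι → ℝ}
    (hc : Tendsto c l atTop) {u : ι → E} (hu : ∀ᶠ i in l, c i • (x - u i) ∈ A (u i)) :
    Tendsto u l (nhds x) := by
  refine Metric.tendsto_nhds.2 fun ε hε ↦ ?_
  obtain ⟨z, ⟨y, hy⟩, hxz⟩ := Metric.mem_closure_iff.1 hx (ε / 3) (by positivity)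
  have h_small : ∀ᶠ i in l, ‖y‖ / c i < ε / 3 :=
    (hc.const_div_atTop ‖y‖).eventually_lt_const (by positivity)
  filter_upwards [hu, hc.eventually_gt_atTop 0, h_small] with i hui hci hyi
  calc
    dist (u i) x ≤ dist (u i) z + dist x z := dist_triangle_right _ _ _
    _ ≤ (dist x z + ‖y‖ / c i) + dist x z := by
      gcongr
      simpa only [dist_eq_norm] using hA.norm_resolvent_sub_le_of_mem hci hy hui
    _ < ε := by linarith

end InnerProductSpace

/-- For a maximal monotone operator `A` and `x ∈ D(A)`, the resolvents `u n = Jₙ x`,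
characterized by `n (x - u n) ∈ A (u n)`, converge to `x` as `n → ∞`. -/
theorem resolvent_tendsto {m : ℕ}
    (A : EuclideanSpace ℝ (Fin m) → Set (EuclideanSpace ℝ (Fin m)))
    (hA : IsMaximalMonotone A) (x : EuclideanSpace ℝ (Fin m)) (hx : (A x).Nonempty)
    (u : ℕ → EuclideanSpace ℝ (Fin m))
    (hu : ∀ n : ℕ, 0 < n → (n : ℝ) • (x - u n) ∈ A (u n)) :
    Tendsto u atTop (nhds x) := by
  exact resolvent_tendsto_general hA.1 (subset_closure hx) tendsto_natCast_atTop_atTop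
    ((eventually_gt_atTop 0).mono hu)
end

section
/- Let A be a maximal monotone operator on ℝ^m and for each positive integer n let J_n : ℝ^m → ℝ^m be a map satisfying n(x − J_n(x)) ∈ A(J_n(x)) for every x ∈ ℝ^m; set A_n(x) := n(x − J_n(x)). Let x ∈ ℝ^m with x ∉ D(A), and let (x_n) be a sequence in ℝ^m with x_n → x. Then liminf_{n→∞} ‖A_n(x_n)‖ = ∞. -/
open Filter Set
open scoped RealInnerProductSpace ENNReal

/-!
On a set of indices where the `Aₙ(xₙ)` stay bounded, `Jₙ xₙ = xₙ - n⁻¹ Aₙ(xₙ)` converges strongly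
to `x`, while the `Aₙ(xₙ)` have a weak cluster point `z` by Banach–Alaoglu. The inequality
`0 ≤ ⟪Jₙ xₙ - v, Aₙ(xₙ) - w⟫` for `w ∈ A v` passes to the limit, because the inner product of a
strongly convergent and a bounded weakly convergent family converges. By maximality `z ∈ A x`, so
`x ∈ D(A)`. Weak compactness is all that is asked of the space, hence any Hilbert space will do.
-/

section WeakConvergence

variable {𝕜 E ι : Type*} [RCLike 𝕜] [NormedAddCommGroup E] [InnerProductSpace 𝕜 E]

theorem exists_tendsto_inner_of_isBoundedUnder_norm [CompleteSpace E] {f : Ultrafilter ι}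
    {y : ι → E} (hy : IsBoundedUnder (· ≤ ·) f fun i ↦ ‖y i‖) :
    ∃ z, ∀ v, Tendsto (fun i ↦ inner 𝕜 (y i) v) f (nhds (inner 𝕜 z v)) := by
  obtain ⟨C, hC⟩ := hy
  let φ : ι → WeakDual 𝕜 E := fun i ↦ (InnerProductSpace.toDual 𝕜 E (y i)).toWeakDual
  have hφ : ∀ᶠ i in f, φ i ∈ WeakDual.toStrongDual ⁻¹' Metric.closedBall 0 C := by
    filter_upwards [hC] with i hi
    simpa [φ] using hi
  obtain ⟨ψ, -, hψ⟩ := (WeakDual.isCompact_closedBall 0 C).ultrafilter_le_nhds' (f.map φ) hφ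
  refine ⟨(InnerProductSpace.toDual 𝕜 E).symm ψ.toStrongDual, fun v ↦ ?_⟩
  have hlim : Tendsto (fun i ↦ φ i v) f (nhds (ψ v)) :=
    ((WeakDual.eval_continuous v).tendsto ψ).comp hψ
  simpa [φ] using hlim

theorem tendsto_inner_of_tendsto_of_isBoundedUnder_norm {l : Filter ι} {u y : ι → E} {a : E}
    {c : 𝕜} (hu : Tendsto u l (nhds a)) (hb : IsBoundedUnder (· ≤ ·) l fun i ↦ ‖y i‖)
    (hy : Tendsto (fun i ↦ inner 𝕜 (y i) a) l (nhds c)) :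
    Tendsto (fun i ↦ inner 𝕜 (y i) (u i)) l (nhds c) := by
  have hsub : Tendsto (fun i ↦ inner 𝕜 (y i) (u i - a)) l (nhds 0) :=
    (tendsto_sub_nhds_zero_iff.2 hu).op_zero_isBoundedUnder_le hb (fun v w ↦ inner 𝕜 w v)
      fun v w ↦ (norm_inner_le_norm w v).trans_eq (mul_comm _ _)
  simpa [inner_sub_right] using hsub.add hy

end WeakConvergence

theorem tendsto_of_isBoundedUnder_norm_smul_sub {E ι : Type*} [NormedAddCommGroup E]
    [NormedSpace ℝ E] {l : Filter ι} {t : ι → ℝ} {xs u : ι → E} {x : E} (ht : Tendsto t l atTop)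
    (hxs : Tendsto xs l (nhds x)) (hb : IsBoundedUnder (· ≤ ·) l fun i ↦ ‖t i • (xs i - u i)‖) :
    Tendsto u l (nhds x) := by
  have hsmul : Tendsto (fun i ↦ (t i)⁻¹ • t i • (xs i - u i)) l (nhds 0) :=
    ht.inv_tendsto_atTop.zero_smul_isBoundedUnder_le hb
  have hsub : Tendsto (fun i ↦ xs i - u i) l (nhds 0) := by
    refine hsmul.congr' ?_
    filter_upwards [ht.eventually_ne_atTop 0] with i hi
    exact inv_smul_smul₀ hi _
  simpa using hxs.sub hsub

section MonotoneOperator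

variable {E ι : Type*} [NormedAddCommGroup E] [InnerProductSpace ℝ E]

/-- Monotone multivalued operators on a real inner product space, given by their values `A x`;
`IsMonotoneOp` is the case of `ℝ^m`. -/
def IsMonotoneOperator (A : E → Set E) : Prop :=
  ∀ x₁ y₁ x₂ y₂, y₁ ∈ A x₁ → y₂ ∈ A x₂ → (0 : ℝ) ≤ ⟪x₁ - x₂, y₁ - y₂⟫

/-- Maximal monotone multivalued operators on a real inner product space, with maximality stated
pointwise on the graph; `IsMaximalMonotone` is the case of `ℝ^m`. -/
def IsMaximalMonotoneOperator (A : E → Set E) : Prop :=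
  IsMonotoneOperator A ∧
    ∀ x y, (∀ x₂ y₂, y₂ ∈ A x₂ → (0 : ℝ) ≤ ⟪x - x₂, y - y₂⟫) → y ∈ A x

variable {A : E → Set E} {l : Filter ι}

namespace IsMaximalMonotoneOperator

theorem mem_of_tendsto [l.NeBot] (hA : IsMaximalMonotoneOperator A) {u y : ι → E} {x z : E}
    (hmem : ∀ᶠ i in l, y i ∈ A (u i)) (hu : Tendsto u l (nhds x))
    (hb : IsBoundedUnder (· ≤ ·) l fun i ↦ ‖y i‖)
    (hy : ∀ v, Tendsto (fun i ↦ ⟪y i, v⟫) l (nhds ⟪z, v⟫)) : z ∈ A x := by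
  refine hA.2 x z fun v w hw ↦ ?_
  have hyu : Tendsto (fun i ↦ ⟪y i, u i - v⟫) l (nhds ⟪z, x - v⟫) :=
    tendsto_inner_of_tendsto_of_isBoundedUnder_norm (hu.sub_const v) hb (hy (x - v))
  have hwu : Tendsto (fun i ↦ ⟪w, u i - v⟫) l (nhds ⟪w, x - v⟫) :=
    tendsto_const_nhds.inner (hu.sub_const v)
  have hlim : Tendsto (fun i ↦ ⟪y i - w, u i - v⟫) l (nhds ⟪z - w, x - v⟫) := by
    simpa only [← inner_sub_left] using hyu.sub hwu
  rw [real_inner_comm]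
  refine ge_of_tendsto hlim ?_
  filter_upwards [hmem] with i hi
  rw [real_inner_comm]
  exact hA.1 _ _ _ _ hi hw

theorem nonempty_of_tendsto_of_isBoundedUnder_norm [CompleteSpace E] [l.NeBot]
    (hA : IsMaximalMonotoneOperator A) {u y : ι → E} {x : E} (hmem : ∀ᶠ i in l, y i ∈ A (u i))
    (hu : Tendsto u l (nhds x)) (hb : IsBoundedUnder (· ≤ ·) l fun i ↦ ‖y i‖) :
    (A x).Nonempty := by
  have hle : (Ultrafilter.of l : Filter ι) ≤ l := Ultrafilter.of_le l
  obtain ⟨z, hz⟩ := exists_tendsto_inner_of_isBoundedUnder_norm (𝕜 := ℝ) (hb.mono hle)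
  exact ⟨z, hA.mem_of_tendsto (hmem.filter_mono hle) (hu.mono_left hle) (hb.mono hle) hz⟩

end IsMaximalMonotoneOperator

theorem yosida_liminf_top_general [CompleteSpace E] (hA : IsMaximalMonotoneOperator A)
    {t : ι → ℝ} (ht : Tendsto t l atTop) {xs u : ι → E}
    (hu : ∀ᶠ i in l, t i • (xs i - u i) ∈ A (u i)) {x : E} (hx : A x = ∅)
    (hxs : Tendsto xs l (nhds x)) :
    liminf (fun i ↦ ‖t i • (xs i - u i)‖ₑ) l = ⊤ := by
  by_contra hne
  obtain ⟨c, hlt, -⟩ := ENNReal.lt_iff_exists_nnreal_btwn.1 (lt_top_iff_ne_top.2 hne)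
  have hfreq : ∃ᶠ i in l, ‖t i • (xs i - u i)‖ₑ < c := frequently_lt_of_liminf_lt (h := hlt)
  let s : Set ι := {i | ‖t i • (xs i - u i)‖ₑ < c}
  have : (l ⊓ 𝓟 s).NeBot := frequently_mem_iff_neBot.1 hfreq
  have hle : l ⊓ 𝓟 s ≤ l := inf_le_left
  have hb : IsBoundedUnder (· ≤ ·) (l ⊓ 𝓟 s) fun i ↦ ‖t i • (xs i - u i)‖ := by
    refine isBoundedUnder_of_eventually_le (a := (c : ℝ)) ?_
    filter_upwards [mem_inf_of_right (mem_principal_self s)] with i hi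
    exact (enorm_lt_coe.1 hi).le
  have hux : Tendsto u (l ⊓ 𝓟 s) (nhds x) :=
    tendsto_of_isBoundedUnder_norm_smul_sub (ht.mono_left hle) (hxs.mono_left hle) hb
  exact (hA.nonempty_of_tendsto_of_isBoundedUnder_norm (hu.filter_mono hle) hux hb).ne_empty hx

end MonotoneOperator

/-- If `x ∉ D(A)` and `xₙ → x`, then the norms of the Yosida approximations
`Aₙ(xₙ) = n (xₙ - Jₙ xₙ)` satisfy `liminf ‖Aₙ(xₙ)‖ = ∞`. -/
theorem yosida_liminf_top {m : ℕ}
    (A : EuclideanSpace ℝ (Fin m) → Set (EuclideanSpace ℝ (Fin m)))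
    (hA : IsMaximalMonotone A)
    (J : ℕ → EuclideanSpace ℝ (Fin m) → EuclideanSpace ℝ (Fin m))
    (hJ : ∀ n : ℕ, 0 < n → ∀ x, (n : ℝ) • (x - J n x) ∈ A (J n x))
    (x : EuclideanSpace ℝ (Fin m)) (hx : A x = ∅)
    (xs : ℕ → EuclideanSpace ℝ (Fin m)) (hxs : Tendsto xs atTop (nhds x)) :
    liminf (fun n : ℕ => (‖(n : ℝ) • (xs n - J n (xs n))‖₊ : ℝ≥0∞)) atTop = ⊤ :=
  yosida_liminf_top_general hA tendsto_natCast_atTop_atTop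
    ((eventually_gt_atTop 0).mono fun n hn ↦ hJ n hn (xs n)) hx hxs
end

section
/- Let A be a maximal monotone operator on ℝ^m whose domain D(A) has nonempty interior. Then there exist a ∈ ℝ^m, c₁ > 0 and c₂ ≥ 0 such that for every (x, y) ∈ Gr(A): ⟨x − a, y⟩ ≥ c₁‖y‖ − c₂‖x − a‖ − c₁c₂. -/
open Set
open scoped RealInnerProductSpace

/-!
Fix a point `z` of the domain and `g ∈ A z`. Monotonicity gives
`f (z - x) ≤ g (z - x) ≤ ‖g‖ * ‖z - x‖` for every `f ∈ A x`, with a constant that depends on `z` but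
not on `x` or `f`. By Baire's theorem, one constant `c` works for all `z` in some ball around a
point `a`. Writing `z = a + w` and letting `w` run over that ball turns these upper bounds on
`f w` into a bound on `‖f‖`.
-/

section Dual

variable {E : Type*} [NormedAddCommGroup E] [NormedSpace ℝ E]
  (A : E → Set (StrongDual ℝ E))

/-- Monotonicity of a multivalued operator from a normed space to its dual, the duality pairing
taking the place of the inner product. -/
def IsMonotoneToDual : Prop :=
  ∀ x₁ f₁ x₂ f₂, f₁ ∈ A x₁ → f₂ ∈ A x₂ → 0 ≤ (f₁ - f₂) (x₁ - x₂)

/-- The points towards which the values of `A` have slope at most `c`. These sets are closed and,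
for monotone `A`, cover the domain as `c` increases, so that Baire's theorem applies to them. -/
def slopeBoundSet (c : ℝ) : Set E :=
  {z | ∀ x, ∀ f ∈ A x, f (z - x) ≤ c * ‖z - x‖}

theorem isClosed_slopeBoundSet (c : ℝ) : IsClosed (slopeBoundSet A c) := by
  simp only [slopeBoundSet, ofPred_forall]
  exact isClosed_iInter fun x => isClosed_iInter fun f => isClosed_iInter fun _ =>
    isClosed_le (by fun_prop) (by fun_prop)

theorem slopeBoundSet_mono : Monotone (slopeBoundSet A) :=
  fun _ _ hcd _ hz x f hf =>
    (hz x f hf).trans (mul_le_mul_of_nonneg_right hcd (norm_nonneg _))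

variable {A}

theorem IsMonotoneToDual.mem_slopeBoundSet_norm (hA : IsMonotoneToDual A) {z : E}
    {g : StrongDual ℝ E} (hg : g ∈ A z) : z ∈ slopeBoundSet A ‖g‖ := by
  intro x f hf
  have hfg : f (z - x) ≤ g (z - x) := sub_nonneg.1 (hA z g x f hg hf)
  exact hfg.trans ((le_abs_self _).trans (g.le_opNorm (z - x)))

theorem IsMonotoneToDual.domain_subset_iUnion_slopeBoundSet (hA : IsMonotoneToDual A) :
    {x | (A x).Nonempty} ⊆ ⋃ n : ℕ, slopeBoundSet A n := by
  rintro z ⟨g, hg⟩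
  obtain ⟨n, hn⟩ := exists_nat_ge ‖g‖
  exact mem_iUnion.2 ⟨n, slopeBoundSet_mono A hn (hA.mem_slopeBoundSet_norm hg)⟩

theorem mul_norm_le_of_closedBall_subset_slopeBoundSet {a : E} {r c : ℝ} (hr : 0 < r) (hc : 0 ≤ c)
    (hball : Metric.closedBall a r ⊆ slopeBoundSet A c) {x : E} {f : StrongDual ℝ E}
    (hf : f ∈ A x) : r * ‖f‖ ≤ f (x - a) + c * (‖x - a‖ + r) := by
  have upper_bound : ∀ w ∈ Metric.closedBall (0 : E) r,
      f w ≤ f (x - a) + c * (‖x - a‖ + r) := by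
    intro w hw
    have hw' : ‖w‖ ≤ r := mem_closedBall_zero_iff.1 hw
    have hz : w - (x - a) = a + w - x := by abel
    have hslope : f (w - (x - a)) ≤ c * ‖w - (x - a)‖ :=
      hz ▸ hball (by simpa using hw') x f hf
    have hnorm : ‖w - (x - a)‖ ≤ ‖x - a‖ + r := by
      linarith [norm_sub_le w (x - a)]
    rw [map_sub] at hslope
    linarith [mul_le_mul_of_nonneg_left hnorm hc]
  rw [mul_comm, ← le_div_iff₀ hr]
  refine f.opNorm_bound_of_ball_bound hr _ fun w hw => abs_le'.2 ⟨upper_bound w hw, ?_⟩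
  simpa only [map_neg] using upper_bound (-w) (by simpa using hw)

end Dual

theorem exists_nonempty_interior_of_subset_iUnion {X ι : Type*} [TopologicalSpace X]
    [BaireSpace X] [Countable ι] {s : Set X} (hs : (interior s).Nonempty) {F : ι → Set X}
    (hF : ∀ i, IsClosed (F i)) (hsF : s ⊆ ⋃ i, F i) : ∃ i, (interior (F i)).Nonempty := by
  by_contra! hempty
  have hmeagre : IsMeagre (⋃ i, F i) :=
    isMeagre_iUnion fun i => ((hF i).isNowhereDense_iff.2 (hempty i)).isMeagre
  exact not_isMeagre_of_isOpen isOpen_interior hs (hmeagre.mono (interior_subset.trans hsF))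

theorem maximal_monotone_interior_coercive_general {E : Type*} [NormedAddCommGroup E]
    [NormedSpace ℝ E] [BaireSpace E] {A : E → Set (StrongDual ℝ E)} (hA : IsMonotoneToDual A)
    (hD : (interior {x | (A x).Nonempty}).Nonempty) :
    ∃ (a : E) (c₁ c₂ : ℝ), 0 < c₁ ∧ 0 ≤ c₂ ∧
      ∀ x, ∀ f ∈ A x, c₁ * ‖f‖ - c₂ * ‖x - a‖ - c₁ * c₂ ≤ f (x - a) := by
  obtain ⟨n, a, ha⟩ := exists_nonempty_interior_of_subset_iUnion hD
    (fun n : ℕ => isClosed_slopeBoundSet A n) hA.domain_subset_iUnion_slopeBoundSet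
  obtain ⟨r, hr, hball⟩ := Metric.nhds_basis_closedBall.mem_iff.1 (mem_interior_iff_mem_nhds.1 ha)
  refine ⟨a, r, n, hr, n.cast_nonneg, fun x f hf => ?_⟩
  linarith [mul_norm_le_of_closedBall_subset_slopeBoundSet hr n.cast_nonneg hball hf]

theorem IsMonotoneOp.toDual_image {m : ℕ}
    {A : EuclideanSpace ℝ (Fin m) → Set (EuclideanSpace ℝ (Fin m))} (hA : IsMonotoneOp A) :
    IsMonotoneToDual fun x => InnerProductSpace.toDual ℝ _ '' A x := by
  rintro x₁ _ x₂ _ ⟨y₁, hy₁, rfl⟩ ⟨y₂, hy₂, rfl⟩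
  simpa only [← map_sub, InnerProductSpace.toDual_apply_apply, real_inner_comm] using
    hA x₁ y₁ x₂ y₂ hy₁ hy₂

/-- For a maximal monotone operator whose domain has nonempty interior, there exist
`a`, `c₁ > 0`, `c₂ ≥ 0` with `⟨x - a, y⟩ ≥ c₁‖y‖ - c₂‖x - a‖ - c₁c₂` on the graph of `A`. -/
theorem maximal_monotone_interior_coercive {m : ℕ}
    (A : EuclideanSpace ℝ (Fin m) → Set (EuclideanSpace ℝ (Fin m)))
    (hA : IsMaximalMonotone A)
    (hD : (interior {x | (A x).Nonempty}).Nonempty) :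
    ∃ (a : EuclideanSpace ℝ (Fin m)) (c₁ c₂ : ℝ), 0 < c₁ ∧ 0 ≤ c₂ ∧
      ∀ x y : EuclideanSpace ℝ (Fin m), y ∈ A x →
        c₁ * ‖y‖ - c₂ * ‖x - a‖ - c₁ * c₂ ≤ ⟪x - a, y⟫ := by
  obtain ⟨a, c₁, c₂, hc₁, hc₂, h⟩ :=
    maximal_monotone_interior_coercive_general hA.1.toDual_image
      (by simpa only [image_nonempty] using hD)
  refine ⟨a, c₁, c₂, hc₁, hc₂, fun x y hy => ?_⟩
  simpa only [LinearIsometryEquiv.norm_map, InnerProductSpace.toDual_apply_apply,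
    real_inner_comm] using h x _ (mem_image_of_mem _ hy)
end
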